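/- arXiv:2007.15725 — 2 statements merged into one kernel-verified Lean document; each statement's English description precedes it below -/
import Mathlib

section
/- Let α ∈ R^n with α_j ≤ 0 for all j and α ≠ 0, let β ∈ R^m and γ ∈ R, and suppose α·z + β·δ ≤ γ is valid for X^{0,u} and defines a facet of conv(X^{0,u}). Then the inequality is a positive multiple of one of the following: δ_i − δ_{i+1} − Σ_{j∈S_{i+1}∖S_i} z_j ≤ 0 for some i ∈ {1,…,m−1}; 1 − δ_1 − Σ_{j∈S_1} z_j ≤ 0; or −z_j ≤ 0 for some j ∈ J. -/
open Finset

noncomputable section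

def Xset (n m l u : ℕ) (S : Fin m → Finset (Fin n)) : Set ((Fin n → ℝ) × (Fin m → ℝ)) :=
  {zd | (∀ j, zd.1 j = 0 ∨ zd.1 j = 1) ∧ (∀ i, zd.2 i = 0 ∨ zd.2 i = 1) ∧
        (∀ i, zd.2 i = ∏ j ∈ S i, (1 - zd.1 j)) ∧
        (l : ℝ) ≤ ∑ j, zd.1 j ∧ ∑ j, zd.1 j ≤ (u : ℝ)}

def Dset (n m l u : ℕ) (S : Fin m → Finset (Fin n)) : Set (Fin m → ℝ) :=
  Prod.snd '' Xset n m l u S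

def Xfiber (n m l u : ℕ) (S : Fin m → Finset (Fin n)) (δ : Fin m → ℝ) :
    Set (Fin n → ℝ) :=
  {z | (z, δ) ∈ Xset n m l u S}

/-- The family is closed under nonempty intersection. -/
def ClosedInter (n m : ℕ) (S : Fin m → Finset (Fin n)) : Prop :=
  ∀ i j : Fin m, (S i ∩ S j).Nonempty → ∃ k, S i ∩ S j = S k

/-- The family is proper. -/
def ProperFam (n m l u : ℕ) (S : Fin m → Finset (Fin n)) : Prop :=
  ClosedInter n m S ∧
  ∃ D : Finset (Fin m → ℝ), (D : Set (Fin m → ℝ)) = Dset n m l u S ∧ D.card = m + 1 ∧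
    AffineIndependent ℝ (Subtype.val : {x : Fin m → ℝ // x ∈ D} → (Fin m → ℝ))

/-- `f x ≤ c` is valid and defines a facet of `conv P`. -/
def IsFacet {E : Type*} [AddCommGroup E] [Module ℝ E] (P : Set E) (f : E → ℝ) (c : ℝ) :
    Prop :=
  (∀ x ∈ P, f x ≤ c) ∧
  Module.finrank ℝ (affineSpan ℝ {x ∈ convexHull ℝ P | f x = c}).direction + 1 =
    Module.finrank ℝ (affineSpan ℝ P).direction

def SS (n m : ℕ) (S : Fin m → Finset (Fin n)) : ℕ → Finset (Fin n) :=
  fun k => if h : 1 ≤ k ∧ k ≤ m then S ⟨k - 1, by omega⟩ else if k = 0 then ∅ else Finset.univ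

def dd (m : ℕ) (δ : Fin m → ℝ) : ℕ → ℝ :=
  fun k => if h : 1 ≤ k ∧ k ≤ m then δ ⟨k - 1, by omega⟩ else if k = 0 then 1 else 0

def mixLeLHS (n m u : ℕ) (S : Fin m → Finset (Fin n)) (p : ℕ) (S' : Finset (Fin n))
    (zd : (Fin n → ℝ) × (Fin m → ℝ)) : ℝ :=
  ∑ j ∈ S', zd.1 j + ((u : ℝ) - ((S' \ SS n m S p).card : ℝ)) * dd m zd.2 p
    + ∑ i ∈ Finset.Icc (p + 1) m,
        (((S' \ SS n m S (i - 1)).card : ℝ) - ((S' \ SS n m S i).card : ℝ)) * dd m zd.2 i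

def MixLe (n m u : ℕ) (S : Fin m → Finset (Fin n)) (p : ℕ) (S' : Finset (Fin n))
    (zd : (Fin n → ℝ) × (Fin m → ℝ)) : Prop :=
  mixLeLHS n m u S p S' zd ≤ (u : ℝ)

def mixGeLHS (n m l : ℕ) (S : Fin m → Finset (Fin n)) (p : ℕ) (S' : Finset (Fin n))
    (zd : (Fin n → ℝ) × (Fin m → ℝ)) : ℝ :=
  (((S' ∪ SS n m S p).card : ℝ) - (n : ℝ) + (l : ℝ)) * dd m zd.2 p
    + ∑ i ∈ Finset.Icc (p + 1) m,
        (((S' ∪ SS n m S i).card : ℝ) - ((S' ∪ SS n m S (i - 1)).card : ℝ)) * dd m zd.2 i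
    - ∑ j ∈ S', zd.1 j

def MixGe (n m l : ℕ) (S : Fin m → Finset (Fin n)) (p : ℕ) (S' : Finset (Fin n))
    (zd : (Fin n → ℝ) × (Fin m → ℝ)) : Prop :=
  mixGeLHS n m l S p S' zd ≤ 0

def NestedLin (n m l u : ℕ) (S : Fin m → Finset (Fin n))
    (zd : (Fin n → ℝ) × (Fin m → ℝ)) : Prop :=
  ((l : ℝ) ≤ ∑ j, zd.1 j) ∧ (∑ j, zd.1 j ≤ (u : ℝ)) ∧
  (∀ i : Fin m, ∀ j ∈ S i, zd.1 j + zd.2 i ≤ 1) ∧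
  (1 ≤ dd m zd.2 1 + ∑ j ∈ SS n m S 1, zd.1 j) ∧
  (0 ≤ dd m zd.2 m) ∧
  (∀ j, 0 ≤ zd.1 j) ∧
  (∀ j, j ∉ SS n m S m → zd.1 j ≤ 1) ∧
  (∀ i : ℕ, 1 ≤ i → i + 1 ≤ m → dd m zd.2 (i + 1) ≤ dd m zd.2 i) ∧
  (∀ i : ℕ, 1 ≤ i → i + 1 ≤ m →
    dd m zd.2 i - dd m zd.2 (i + 1) ≤ ∑ j ∈ SS n m S (i + 1) \ SS n m S i, zd.1 j)

def FollowsPattern (n : ℕ) (α α' : Fin n → ℝ) : Prop :=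
  (∀ j, (0 ≤ α j → 0 ≤ α' j) ∧ (α j ≤ 0 → α' j ≤ 0)) ∧
  (∀ j₁ j₂ : Fin n, α j₂ ≤ α j₁ → α' j₂ ≤ α' j₁)

def IsFacetSet {E : Type*} [AddCommGroup E] [Module ℝ E] (P : Set E) (F : Set E) : Prop :=
  ∃ (f : E →ₗ[ℝ] ℝ) (c : ℝ), (∀ x ∈ P, f x ≤ c) ∧
    F = {x ∈ convexHull ℝ P | f x = c} ∧
    Module.finrank ℝ (affineSpan ℝ F).direction + 1 =
      Module.finrank ℝ (affineSpan ℝ P).direction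

/-!
The face of `conv(X)` cut out by a valid inequality is the convex hull of its tight points, so for a
full-dimensional `conv(X)` the tight points of a facet span a hyperplane, and a facet inequality is
proportional to any other equation its tight points satisfy. Fix `j` with `α_j < 0`.

If no tight point has `z_j = 1`, that equation is `z_j = 0`. Otherwise let `j` enter the chain at
`S_q`. Deleting `j` from the support `A` of a tight point gains `-α_j > 0`, so by validity it must
also change some `δ_i`, which means that `j` is the only element of `A` in some `S_i` with `i ≥ q`,
hence the only one in `S_q`. Comparing the points supported on `{j}` and `{k}` shows that every `k`
entering the chain together with `j` has `α_k < 0`, so the same holds for `k`. A tight `A` therefore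
meets `S_q ∖ S_{q-1}` at most once, and if it does it avoids `S_{q-1}`: this says exactly that
`δ_{q-1} - δ_q = Σ_{k ∈ S_q ∖ S_{q-1}} z_k`, with `S_0 = ∅` and `δ_0 = 1`.
-/

section LinearFunctionals

variable {K E : Type*} [Field K] [AddCommGroup E] [Module K E] {P : Set E} {f g : E →ₗ[K] K} {c : K}

theorem vectorSpan_le_ker (h : ∀ x ∈ P, f x = c) : vectorSpan K P ≤ LinearMap.ker f := by
  rw [vectorSpan_def, Submodule.span_le]
  rintro _ ⟨x, hx, y, hy, rfl⟩
  simp [h x hx, h y hy]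

theorem vectorSpan_eq_top_of_forall_dual
    (h : ∀ f : E →ₗ[K] K, (∀ x ∈ P, ∀ y ∈ P, f x = f y) → f = 0) : vectorSpan K P = ⊤ := by
  by_contra hne
  obtain ⟨f, hf, hle⟩ := Submodule.exists_le_ker_of_lt_top _ (lt_top_iff_ne_top.2 hne)
  refine hf (h f fun x hx y hy ↦ sub_eq_zero.1 ?_)
  rw [← map_sub]
  exact hle (vsub_mem_vectorSpan K hx hy)

theorem exists_eq_smul_of_ker_le (h : LinearMap.ker g ≤ LinearMap.ker f) :
    ∃ t : K, f = t • g := by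
  have hspan : f ∈ Submodule.span K (Set.range fun _ : Unit ↦ g) :=
    mem_span_of_iInf_ker_le_ker ((iInf_le _ ()).trans h)
  rw [Set.range_const, Submodule.mem_span_singleton] at hspan
  exact hspan.imp fun _ ht ↦ ht.symm

end LinearFunctionals

theorem sep_convexHull_eq_convexHull_sep {𝕜 E : Type*} [Field 𝕜] [LinearOrder 𝕜]
    [IsStrictOrderedRing 𝕜] [AddCommGroup E] [Module 𝕜 E] {P : Set E} {f : E →ₗ[𝕜] 𝕜} {c : 𝕜}
    (hv : ∀ x ∈ P, f x ≤ c) :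
    {x ∈ convexHull 𝕜 P | f x = c} = convexHull 𝕜 {x ∈ P | f x = c} := by
  refine subset_antisymm ?_ fun x hx ↦ ⟨convexHull_mono (Set.sep_subset _ _) hx, ?_⟩
  · rintro x ⟨hx, hfx⟩
    rw [_root_.convexHull_eq] at hx
    obtain ⟨ι, t, w, p, hw, hw1, hp, rfl⟩ := hx
    have hslack : ∑ i ∈ t, w i * (c - f (p i)) = 0 := by
      rw [centerMass_eq_of_sum_1 _ _ hw1] at hfx
      simp only [map_sum, map_smul, smul_eq_mul] at hfx
      simp only [mul_sub, sum_sub_distrib, ← sum_mul, hw1, hfx, one_mul, sub_self]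
    have hsupport : ∀ i ∈ t, w i ≠ 0 → f (p i) = c := fun i hi hwi ↦ by
      have hterm := (sum_eq_zero_iff_of_nonneg fun i hi ↦
        mul_nonneg (hw i hi) (sub_nonneg.2 (hv _ (hp i hi)))).1 hslack i hi
      linarith [(mul_eq_zero.1 hterm).resolve_left hwi]
    rw [← centerMass_filter_ne_zero]
    refine centerMass_mem_convexHull _ (fun i hi ↦ hw i (mem_of_mem_filter i hi)) ?_ ?_
    · rw [sum_filter_ne_zero, hw1]
      exact one_pos
    · intro i hi
      obtain ⟨hit, hwi⟩ := mem_filter.1 hi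
      exact ⟨hp i hit, hsupport i hit hwi⟩
  · exact convexHull_min (fun y hy ↦ hy.2) (convex_hyperplane f.isLinear c) hx

section Facets

variable {E : Type*} [AddCommGroup E] [Module ℝ E] {P : Set E} {f g : E →ₗ[ℝ] ℝ} {c d : ℝ}

theorem IsFacet.finrank_vectorSpan_add_one (hP : IsFacet P f c) :
    Module.finrank ℝ (vectorSpan ℝ {x ∈ P | f x = c}) + 1 =
      Module.finrank ℝ (vectorSpan ℝ P) := by
  have hdim := hP.2
  rwa [sep_convexHull_eq_convexHull_sep hP.1, affineSpan_convexHull, direction_affineSpan,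
    direction_affineSpan] at hdim

-- In dimension at most one the empty set could pass for a facet, since its span has `finrank` 0.
theorem IsFacet.exists_eq_smul [FiniteDimensional ℝ E] (hE : 1 < Module.finrank ℝ E)
    (htop : vectorSpan ℝ P = ⊤) (hP : IsFacet P f c) (hg : g ≠ 0)
    (hgd : ∀ x ∈ P, f x = c → g x = d) : ∃ t : ℝ, f = t • g ∧ c = t * d := by
  set F := {x ∈ P | f x = c}
  have hcodim : Module.finrank ℝ (vectorSpan ℝ F) + 1 = Module.finrank ℝ E := by
    rw [hP.finrank_vectorSpan_add_one, htop, finrank_top]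
  have hker : vectorSpan ℝ F = LinearMap.ker g := by
    refine Submodule.eq_of_le_of_finrank_eq (vectorSpan_le_ker fun x hx ↦ hgd x hx.1 hx.2) ?_
    exact Nat.add_right_cancel (hcodim.trans (Module.Dual.finrank_ker_add_one_of_ne_zero hg).symm)
  have hf : vectorSpan ℝ F ≤ LinearMap.ker f := vectorSpan_le_ker fun x hx ↦ hx.2
  obtain ⟨t, rfl⟩ := exists_eq_smul_of_ker_le (hker ▸ hf)
  obtain ⟨x, hxP, hxc⟩ : F.Nonempty := by
    by_contra hempty
    rw [Set.not_nonempty_iff_eq_empty.1 hempty, vectorSpan_empty, finrank_bot] at hcodim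
    omega
  exact ⟨t, rfl, by rw [← hxc, LinearMap.smul_apply, hgd x hxP hxc, smul_eq_mul]⟩

end Facets

section Pairing

variable {J I : Type*} [Fintype J] [Fintype I]

/-- The linear functional `(z, δ) ↦ a·z + b·δ`. -/
def pairing (a : J → ℝ) (b : I → ℝ) : (J → ℝ) × (I → ℝ) →ₗ[ℝ] ℝ :=
  (dotProductBilin ℝ ℝ a).coprod (dotProductBilin ℝ ℝ b)

theorem pairing_apply (a : J → ℝ) (b : I → ℝ) (x : (J → ℝ) × (I → ℝ)) :
    pairing a b x = ∑ j, a j * x.1 j + ∑ i, b i * x.2 i :=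
  rfl

theorem pairing_single_left [DecidableEq J] (a : J → ℝ) (b : I → ℝ) (j : J) :
    pairing a b (Pi.single j 1, 0) = a j := by
  simp [pairing_apply, Pi.single_apply]

theorem pairing_single_right [DecidableEq I] (a : J → ℝ) (b : I → ℝ) (i : I) :
    pairing a b (0, Pi.single i 1) = b i := by
  simp [pairing_apply, Pi.single_apply]

theorem exists_eq_pairing (f : (J → ℝ) × (I → ℝ) →ₗ[ℝ] ℝ) : ∃ a b, f = pairing a b := by
  classical
  refine ⟨fun j ↦ f (Pi.single j 1, 0), fun i ↦ f (0, Pi.single i 1), ?_⟩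
  ext <;> simp [pairing_single_left, pairing_single_right]

end Pairing

section Vertices

variable {J I : Type*} [DecidableEq J] [Fintype I] {S : I → Finset J} {A : Finset J} {i : I} {j : J}

/-- The indices `i` with `δ_i = 1` at the 0/1 point supported on `A`. -/
def missed (S : I → Finset J) (A : Finset J) : Finset I :=
  {i | Disjoint (S i) A}

theorem mem_missed : i ∈ missed S A ↔ Disjoint (S i) A := by
  simp [missed]

theorem missed_insert (h : ∀ i, j ∈ S i → ¬Disjoint (S i) A) :
    missed S (insert j A) = missed S A := by
  ext i
  rw [mem_missed, mem_missed, disjoint_insert_right]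
  exact ⟨And.right, fun hd ↦ ⟨fun hj ↦ h i hj hd, hd⟩⟩

/-- The point `(z, δ)` of the multilinear set whose `z` is the indicator of `A`. -/
def vertex (S : I → Finset J) (A : Finset J) : (J → ℝ) × (I → ℝ) :=
  (fun j ↦ if j ∈ A then 1 else 0, fun i ↦ if Disjoint (S i) A then 1 else 0)

/-- The multilinear set with lower cardinality bound `0`, for arbitrary index types. -/
def cappedSet (S : I → Finset J) (u : ℕ) : Set ((J → ℝ) × (I → ℝ)) :=
  vertex S '' {A | #A ≤ u}

theorem prod_one_sub_ite_mem (T A : Finset J) :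
    ∏ j ∈ T, (1 - if j ∈ A then (1 : ℝ) else 0) = if Disjoint T A then 1 else 0 := by
  have hflip : ∀ j, (1 - if j ∈ A then (1 : ℝ) else 0) = if j ∉ A then 1 else 0 := fun j ↦ by
    split_ifs <;> simp
  simp only [hflip, prod_boole, disjoint_left]

theorem Xset_zero_eq_cappedSet {n m u : ℕ} (S : Fin m → Finset (Fin n)) :
    Xset n m 0 u S = cappedSet S u := by
  ext ⟨z, δ⟩
  constructor
  · rintro ⟨hz, -, hδ, -, hsum⟩
    obtain ⟨A, rfl⟩ : ∃ A : Finset (Fin n), z = fun j ↦ if j ∈ A then 1 else 0 := by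
      refine ⟨({j | z j = 1} : Finset (Fin n)), funext fun j ↦ ?_⟩
      rcases hz j with h | h <;> dsimp only at h <;> simp [h]
    refine ⟨A, by simpa using hsum, Prod.ext rfl (funext fun i ↦ ?_)⟩
    exact (prod_one_sub_ite_mem _ _).symm.trans (hδ i).symm
  · rintro ⟨A, hA, hvertex⟩
    obtain ⟨rfl, rfl⟩ := Prod.mk.inj hvertex
    refine ⟨fun j ↦ ?_, fun i ↦ ?_, fun i ↦ (prod_one_sub_ite_mem _ _).symm, ?_, ?_⟩
    · exact (ite_eq_or_eq _ _ _).symm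
    · exact (ite_eq_or_eq _ _ _).symm
    · simp
    · simpa using hA

variable [Fintype J] (a : J → ℝ) (b : I → ℝ)

theorem pairing_vertex (S : I → Finset J) (A : Finset J) :
    pairing a b (vertex S A) = ∑ j ∈ A, a j + ∑ i ∈ missed S A, b i := by
  simp [pairing_apply, vertex, missed, sum_filter]

theorem pairing_vertex_insert (hj : j ∉ A) (h : ∀ i, j ∈ S i → ¬Disjoint (S i) A) :
    pairing a b (vertex S (insert j A)) = a j + pairing a b (vertex S A) := by
  rw [pairing_vertex, pairing_vertex, missed_insert h, sum_insert hj, add_assoc]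

end Vertices

section Layers

variable {J I : Type*} [LinearOrder I] {S : I → Finset J} {p q i : I} {j : J}

/-- The elements that enter the chain `S` at the index `q`. -/
def layer (S : I → Finset J) (q : I) : Set J :=
  {j | ∀ i, j ∈ S i ↔ q ≤ i}

theorem exists_mem_layer [WellFoundedLT I] (hS : Monotone S) (hj : j ∈ S i) :
    ∃ q, j ∈ layer S q := by
  obtain ⟨q, hq⟩ := exists_minimal_of_wellFoundedLT (fun i ↦ j ∈ S i) ⟨i, hj⟩
  exact ⟨q, fun k ↦ ⟨fun hk ↦ not_lt.1 fun hlt ↦ hq.not_prop_of_lt hlt hk,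
    fun hle ↦ hS hle hq.prop⟩⟩

theorem layer_eq_of_isMin (hS : Monotone S) (hq : IsMin q) : layer S q = S q := by
  ext j
  refine ⟨fun hj ↦ (hj q).2 le_rfl, fun hj i ↦ ?_⟩
  exact iff_of_true (hS (hq.isBot i) hj) (hq.isBot i)

theorem layer_eq_sdiff (hS : Monotone S) (hpq : p ⋖ q) : layer S q = ↑(S q) \ ↑(S p) := by
  ext j
  refine ⟨fun hj ↦ ⟨(hj q).2 le_rfl, fun hp ↦ hpq.lt.not_ge ((hj p).1 hp)⟩, ?_⟩
  rintro ⟨hjq, hjp⟩ i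
  refine ⟨fun hi ↦ ?_, fun hle ↦ hS hle hjq⟩
  exact hpq.ge_of_gt (not_le.1 fun hip ↦ hjp (hS hip hi))

theorem layer_nonempty [WellFoundedGT I] (hS : StrictMono S) (hne : (S q).Nonempty) :
    (layer S q).Nonempty := by
  by_cases hq : IsMin q
  · rwa [layer_eq_of_isMin hS.monotone hq, coe_nonempty]
  · obtain ⟨p, hpq⟩ := exists_covBy_of_wellFoundedGT hq
    rw [layer_eq_sdiff hS.monotone hpq]
    exact Set.sdiff_nonempty.2 (coe_subset.not.2 (hS hpq.lt).not_subset)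

theorem exists_card_le_one_forall_not_disjoint [WellFoundedLT I] (hS : Monotone S)
    (hcard : ∀ i, 2 ≤ #(S i)) (j : J) :
    ∃ A : Finset J, #A ≤ 1 ∧ j ∉ A ∧ ∀ i, j ∈ S i → ¬Disjoint (S i) A := by
  by_cases hj : ∃ i, j ∈ S i
  · obtain ⟨i, hi⟩ := hj
    obtain ⟨q, hq⟩ := exists_mem_layer hS hi
    obtain ⟨k, hkq, hkj⟩ := exists_mem_ne (hcard q) j
    refine ⟨{k}, (card_singleton k).le, by simpa using hkj.symm, fun i hi ↦ ?_⟩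
    simpa using hS ((hq i).1 hi) hkq
  · exact ⟨∅, by simp, by simp, fun i hi ↦ absurd ⟨i, hi⟩ hj⟩

variable [DecidableEq J] [Fintype I]

theorem missed_singleton_of_mem_layer (hj : j ∈ layer S q) :
    missed S {j} = ({i | i < q} : Finset I) := by
  ext i
  simp [mem_missed, hj i]

theorem missed_eq_missed_singleton {A : Finset J} (hS : Monotone S) (hjA : j ∈ A) (hj : j ∈ S i)
    (hd : Disjoint (S i) (A.erase j)) : missed S A = missed S {j} := by
  ext k
  simp only [mem_missed, disjoint_singleton_right]
  refine ⟨fun h hk ↦ disjoint_left.1 h hk hjA, fun hk ↦ ?_⟩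
  have hki : k ≤ i := not_lt.1 fun hlt ↦ hk (hS hlt.le hj)
  exact disjoint_of_erase_right hk (hd.mono_left (hS hki))

theorem eq_zero_of_sum_missed (hS : StrictMono S) (hne : ∀ i, (S i).Nonempty) {b : I → ℝ}
    (hb : ∀ A : Finset J, #A ≤ 1 → ∑ i ∈ missed S A, b i = ∑ i, b i) : b = 0 := by
  funext i
  induction i using WellFoundedGT.induction with
  | ind i ih =>
    obtain ⟨j, hj⟩ := layer_nonempty hS (hne i)
    have hsum := hb {j} (card_singleton j).le
    rw [missed_singleton_of_mem_layer hj, ← sum_filter_add_sum_filter_not univ (· < i),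
      left_eq_add] at hsum
    rwa [sum_eq_single_of_mem i (by simp)] at hsum
    intro k hk hki
    exact ih k ((not_lt.1 (mem_filter.1 hk).2).lt_of_ne hki.symm)

end Layers

theorem vectorSpan_cappedSet_eq_top {J I : Type*} [Finite J] [DecidableEq J] [Finite I]
    [LinearOrder I] {S : I → Finset J} {u : ℕ} (hS : StrictMono S) (hcard : ∀ i, 2 ≤ #(S i))
    (hu : 2 ≤ u) : vectorSpan ℝ (cappedSet S u) = ⊤ := by
  cases nonempty_fintype J
  cases nonempty_fintype I
  refine vectorSpan_eq_top_of_forall_dual fun f hf ↦ ?_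
  obtain ⟨a, b, rfl⟩ := exists_eq_pairing f
  have hconst : ∀ A B : Finset J, #A ≤ 2 → #B ≤ 2 →
      pairing a b (vertex S A) = pairing a b (vertex S B) := fun A B hA hB ↦
    hf _ ⟨A, hA.trans hu, rfl⟩ _ ⟨B, hB.trans hu, rfl⟩
  obtain rfl : a = 0 := by
    funext j
    obtain ⟨A, hA, hjA, hhit⟩ := exists_card_le_one_forall_not_disjoint hS.monotone hcard j
    have hinsert := hconst (insert j A) A ((card_insert_le j A).trans (by omega)) (by omega)
    rwa [pairing_vertex_insert a b hjA hhit, add_eq_right] at hinsert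
  obtain rfl : b = 0 := by
    refine eq_zero_of_sum_missed hS (fun i ↦ card_pos.1 (by have := hcard i; omega)) fun A hA ↦ ?_
    have hempty := hconst A ∅ (by omega) (by simp)
    simpa [pairing_vertex, missed] using hempty
  ext <;> simp [pairing_apply]

section TightSets

variable {J I : Type*} [Fintype J] [DecidableEq J] [Fintype I]
  {S : I → Finset J} {u : ℕ} {α : J → ℝ} {β : I → ℝ} {γ : ℝ} {A : Finset J} {i q : I} {j k : J}

/-- The supports of the points of `cappedSet S u` at which `α·z + β·δ = γ`. -/
def tightSets (S : I → Finset J) (u : ℕ) (α : J → ℝ) (β : I → ℝ) (γ : ℝ) : Set (Finset J) :=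
  {A | #A ≤ u ∧ pairing α β (vertex S A) = γ}

theorem exists_disjoint_erase_of_mem_tightSets
    (hv : ∀ x ∈ cappedSet S u, pairing α β x ≤ γ) (hA : A ∈ tightSets S u α β γ)
    (hjA : j ∈ A) (hj : α j < 0) : ∃ i, j ∈ S i ∧ Disjoint (S i) (A.erase j) := by
  by_contra! hhit
  have herase := hv _ ⟨A.erase j, card_erase_le.trans hA.1, rfl⟩
  have htight := hA.2
  rw [← insert_erase hjA, pairing_vertex_insert α β (notMem_erase j A) hhit] at htight
  linarith

variable [LinearOrder I]

theorem singleton_mem_tightSets (hS : Monotone S) (hα : ∀ j, α j ≤ 0)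
    (hv : ∀ x ∈ cappedSet S u, pairing α β x ≤ γ) (hA : A ∈ tightSets S u α β γ)
    (hjA : j ∈ A) (hj : α j < 0) : {j} ∈ tightSets S u α β γ := by
  obtain ⟨i, hji, hd⟩ := exists_disjoint_erase_of_mem_tightSets hv hA hjA hj
  have hcard : #{j} ≤ u := (card_le_card (singleton_subset_iff.2 hjA)).trans hA.1
  refine ⟨hcard, (hv _ ⟨{j}, hcard, rfl⟩).antisymm ?_⟩
  have hrest : ∑ k ∈ A.erase j, α k ≤ 0 := sum_nonpos fun k _ ↦ hα k
  rw [← hA.2, pairing_vertex, pairing_vertex, missed_eq_missed_singleton hS hjA hji hd,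
    ← add_sum_erase A α hjA, sum_singleton]
  linarith

theorem neg_of_mem_layer (hv : ∀ x ∈ cappedSet S u, pairing α β x ≤ γ)
    (htight : {j} ∈ tightSets S u α β γ) (hj : α j < 0) (hjq : j ∈ layer S q)
    (hkq : k ∈ layer S q) : α k < 0 := by
  have hk := hv _ ⟨{k}, htight.1, rfl⟩
  rw [← htight.2, pairing_vertex, pairing_vertex, missed_singleton_of_mem_layer hjq,
    missed_singleton_of_mem_layer hkq, sum_singleton, sum_singleton] at hk
  linarith

theorem exists_layer_forall_tightSets_disjoint_erase (hS : Monotone S) (hα : ∀ j, α j ≤ 0)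
    (hv : ∀ x ∈ cappedSet S u, pairing α β x ≤ γ) (hA : A ∈ tightSets S u α β γ)
    (hjA : j ∈ A) (hj : α j < 0) :
    ∃ q, j ∈ layer S q ∧
      ∀ B ∈ tightSets S u α β γ, ∀ k ∈ B, k ∈ layer S q → Disjoint (S q) (B.erase k) := by
  obtain ⟨i, hji, -⟩ := exists_disjoint_erase_of_mem_tightSets hv hA hjA hj
  obtain ⟨q, hq⟩ := exists_mem_layer hS hji
  refine ⟨q, hq, fun B hB k hkB hkq ↦ ?_⟩
  have hαk := neg_of_mem_layer hv (singleton_mem_tightSets hS hα hv hA hjA hj) hj hq hkq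
  obtain ⟨p, hkp, hd⟩ := exists_disjoint_erase_of_mem_tightSets hv hB hkB hαk
  exact hd.mono_left (hS ((hkq p).1 hkp))

end TightSets

theorem card_inter_sdiff_add_ite_disjoint {J : Type*} [DecidableEq J] {R T A : Finset J}
    (hRT : R ⊆ T) (h : ∀ j ∈ A, j ∈ T \ R → Disjoint T (A.erase j)) :
    #(A ∩ (T \ R)) + (if Disjoint T A then 1 else 0) = if Disjoint R A then 1 else 0 := by
  rcases (A ∩ (T \ R)).eq_empty_or_nonempty with hempty | ⟨j, hj⟩
  · have hiff : Disjoint T A ↔ Disjoint R A := by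
      refine ⟨fun hd ↦ hd.mono_left hRT, fun hd ↦ ?_⟩
      rw [← union_sdiff_of_subset hRT, disjoint_union_left]
      exact ⟨hd, (disjoint_iff_inter_eq_empty.2 hempty).symm⟩
    simp only [hempty, hiff, card_empty, zero_add]
  · obtain ⟨hjA, hjTR⟩ := mem_inter.1 hj
    obtain ⟨hjT, hjR⟩ := mem_sdiff.1 hjTR
    have hd := h j hjA hjTR
    have hsingle : A ∩ (T \ R) = {j} := by
      refine eq_singleton_iff_unique_mem.2 ⟨hj, fun k hk ↦ by_contra fun hkj ↦ ?_⟩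
      obtain ⟨hkA, hkTR⟩ := mem_inter.1 hk
      exact disjoint_left.1 hd (mem_sdiff.1 hkTR).1 (mem_erase.2 ⟨hkj, hkA⟩)
    have hT : ¬Disjoint T A := not_disjoint_iff.2 ⟨j, hjT, hjA⟩
    have hR : Disjoint R A := disjoint_of_erase_right hjR (hd.mono_left hRT)
    rw [hsingle, if_neg hT, if_pos hR, card_singleton]

section Classification

variable {J I : Type*} [Fintype J] [DecidableEq J] [Fintype I] [LinearOrder I]
  {S : I → Finset J} {u : ℕ} {α : J → ℝ} {β : I → ℝ} {γ : ℝ} {p q : I} {j : J}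

theorem IsFacet.exists_pos_eq_mul [Nonempty I] (hS : StrictMono S) (hcard : ∀ i, 2 ≤ #(S i))
    (hu : 2 ≤ u) (hF : IsFacet (cappedSet S u) (pairing α β) γ) (hj : α j < 0)
    {a : J → ℝ} {b : I → ℝ} {d : ℝ} (ha : a j < 0)
    (htight : ∀ A ∈ tightSets S u α β γ, pairing a b (vertex S A) = d) :
    ∃ c, 0 < c ∧ (∀ j, α j = c * a j) ∧ (∀ i, β i = c * b i) ∧ γ = c * d := by
  have hdim : 1 < Module.finrank ℝ ((J → ℝ) × (I → ℝ)) := by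
    have hJ : 2 ≤ Fintype.card J := (hcard (Classical.arbitrary I)).trans (card_le_univ _)
    rw [Module.finrank_prod, Module.finrank_pi, Module.finrank_pi]
    omega
  have hne : pairing a b ≠ 0 := fun h0 ↦ ha.ne <| by
    rw [← pairing_single_left a b j, h0, LinearMap.zero_apply]
  obtain ⟨c, hc, hγ⟩ := hF.exists_eq_smul hdim (vectorSpan_cappedSet_eq_top hS hcard hu) hne <| by
    rintro _ ⟨A, hA, rfl⟩ hAγ
    exact htight A ⟨hA, hAγ⟩
  have hα : ∀ j, α j = c * a j := fun j ↦ by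
    rw [← pairing_single_left α β, hc, LinearMap.smul_apply, pairing_single_left, smul_eq_mul]
  have hβ : ∀ i, β i = c * b i := fun i ↦ by
    rw [← pairing_single_right α β, hc, LinearMap.smul_apply, pairing_single_right, smul_eq_mul]
  exact ⟨c, pos_of_mul_neg_left (hα j ▸ hj) ha.le, hα, hβ, hγ⟩

theorem IsFacet.exists_eq_neg_coordinate [Nonempty I] (hS : StrictMono S) (hcard : ∀ i, 2 ≤ #(S i))
    (hu : 2 ≤ u) (hF : IsFacet (cappedSet S u) (pairing α β) γ) (hj : α j < 0)
    (havoid : ∀ A ∈ tightSets S u α β γ, j ∉ A) :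
    ∃ c, 0 < c ∧ (α = fun k ↦ if k = j then -c else 0) ∧ β = 0 ∧ γ = 0 := by
  obtain ⟨c, hc, hα, hβ, hγ⟩ := hF.exists_pos_eq_mul hS hcard hu hj
    (a := fun k ↦ if k = j then -1 else 0) (b := 0) (d := 0) (by simp) fun A hA ↦ by
      simp [pairing_vertex, havoid A hA]
  exact ⟨c, hc, funext fun k ↦ by simp [hα k], funext fun i ↦ by simp [hβ i], by simp [hγ]⟩

theorem IsFacet.exists_eq_bottom_of_isMin (hS : StrictMono S) (hcard : ∀ i, 2 ≤ #(S i))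
    (hu : 2 ≤ u) (hF : IsFacet (cappedSet S u) (pairing α β) γ) (hj : α j < 0) (hq : IsMin q)
    (hjq : j ∈ layer S q)
    (hiso : ∀ A ∈ tightSets S u α β γ, ∀ k ∈ A, k ∈ layer S q → Disjoint (S q) (A.erase k)) :
    ∃ c, 0 < c ∧ (α = fun k ↦ if k ∈ S q then -c else 0) ∧
      (β = fun i ↦ if i = q then -c else 0) ∧ γ = -c := by
  have : Nonempty I := ⟨q⟩
  simp only [layer_eq_of_isMin hS.monotone hq, mem_coe] at hjq hiso
  obtain ⟨c, hc, hα, hβ, hγ⟩ := hF.exists_pos_eq_mul hS hcard hu hj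
    (a := fun k ↦ if k ∈ S q then -1 else 0) (b := fun i ↦ if i = q then -1 else 0) (d := -1)
    (by simp [hjq]) fun A hA ↦ by
      have hcount : (#(A ∩ S q) : ℝ) + (if Disjoint (S q) A then 1 else 0) = 1 := by
        have hnat := card_inter_sdiff_add_ite_disjoint (empty_subset (S q))
          (by simpa only [sdiff_empty] using hiso A hA)
        rw [sdiff_empty, if_pos (disjoint_empty_left A)] at hnat
        exact_mod_cast hnat
      simp only [pairing_vertex, sum_ite_mem, sum_ite_eq', mem_missed, sum_const, nsmul_eq_mul]
      split_ifs at hcount ⊢ <;> linarith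
  exact ⟨c, hc, funext fun k ↦ by simp [hα k], funext fun i ↦ by simp [hβ i], by simp [hγ]⟩

theorem IsFacet.exists_eq_step_of_covBy (hS : StrictMono S) (hcard : ∀ i, 2 ≤ #(S i))
    (hu : 2 ≤ u) (hF : IsFacet (cappedSet S u) (pairing α β) γ) (hj : α j < 0) (hpq : p ⋖ q)
    (hjq : j ∈ layer S q)
    (hiso : ∀ A ∈ tightSets S u α β γ, ∀ k ∈ A, k ∈ layer S q → Disjoint (S q) (A.erase k)) :
    ∃ c, 0 < c ∧ (α = fun k ↦ if k ∈ S q \ S p then -c else 0) ∧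
      (β = fun i ↦ if i = p then c else if i = q then -c else 0) ∧ γ = 0 := by
  have : Nonempty I := ⟨q⟩
  simp only [layer_eq_sdiff hS.monotone hpq, ← coe_sdiff, mem_coe] at hjq hiso
  obtain ⟨c, hc, hα, hβ, hγ⟩ := hF.exists_pos_eq_mul hS hcard hu hj
    (a := fun k ↦ if k ∈ S q \ S p then -1 else 0)
    (b := fun i ↦ (if i = p then 1 else 0) - if i = q then 1 else 0) (d := 0)
    (by simp only [hjq, if_true]; norm_num) fun A hA ↦ by
      have hcount : (#(A ∩ (S q \ S p)) : ℝ) + (if Disjoint (S q) A then 1 else 0) =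
          if Disjoint (S p) A then 1 else 0 := by
        exact_mod_cast card_inter_sdiff_add_ite_disjoint (hS.monotone hpq.le) (hiso A hA)
      simp only [pairing_vertex, sum_ite_mem, sum_sub_distrib, sum_ite_eq', mem_missed,
        sum_const, nsmul_eq_mul]
      linarith
  refine ⟨c, hc, funext fun k ↦ by simp [hα k], funext fun i ↦ ?_, by simp [hγ]⟩
  rw [hβ i]
  rcases eq_or_ne i p with rfl | hip
  · simp [hpq.ne]
  · rw [if_neg hip, if_neg hip]
    split_ifs <;> simp

end Classification

theorem SS_one {n m : ℕ} (hm : 0 < m) (S : Fin m → Finset (Fin n)) :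
    SS n m S 1 = S ⟨0, hm⟩ :=
  dif_pos ⟨le_rfl, hm⟩

theorem stmt9 (n m l u : ℕ) (S : Fin m → Finset (Fin n))
    (hn : 0 < n) (hm : 0 < m) (hu : 2 ≤ u) (hlu : l < u)
    (hnested : ∀ i j : Fin m, i < j → S i ⊂ S j)
    (hS1 : 2 ≤ (SS n m S 1).card)
    (hSm : l ≤ n - (SS n m S m).card)
    (α : Fin n → ℝ) (β : Fin m → ℝ) (γ : ℝ)
    (hα : ∀ j, α j ≤ 0) (hα0 : α ≠ 0)
    (hfacet : IsFacet (Xset n m 0 u S)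
      (fun zd => ∑ j, α j * zd.1 j + ∑ i, β i * zd.2 i) γ) :
    ∃ c : ℝ, 0 < c ∧
      ((∃ i : Fin m, ∃ h : (i : ℕ) + 1 < m,
          (α = fun j => if j ∈ S ⟨(i : ℕ) + 1, h⟩ \ S i then -c else 0) ∧
          (β = fun k => if k = i then c else if k = (⟨(i : ℕ) + 1, h⟩ : Fin m) then -c else 0) ∧
          γ = 0) ∨
       ((α = fun j => if j ∈ S ⟨0, hm⟩ then -c else 0) ∧
          (β = fun k => if k = (⟨0, hm⟩ : Fin m) then -c else 0) ∧ γ = -c) ∨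
       (∃ j0 : Fin n, (α = fun j => if j = j0 then -c else 0) ∧ β = 0 ∧ γ = 0)) := by
  have hS : StrictMono S := fun i j ↦ hnested i j
  have hcard : ∀ i, 2 ≤ #(S i) := fun i ↦
    (SS_one hm S ▸ hS1).trans (card_le_card (hS.monotone (Nat.zero_le i)))
  have : Nonempty (Fin m) := ⟨⟨0, hm⟩⟩
  have hF : IsFacet (cappedSet S u) (pairing α β) γ := Xset_zero_eq_cappedSet S ▸ hfacet
  obtain ⟨j, hj⟩ : ∃ j, α j < 0 := by
    by_contra! hnonneg
    exact hα0 (funext fun j ↦ (hα j).antisymm (hnonneg j))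
  by_cases havoid : ∀ A ∈ tightSets S u α β γ, j ∉ A
  · obtain ⟨c, hc, hcoeffs⟩ := hF.exists_eq_neg_coordinate hS hcard hu hj havoid
    exact ⟨c, hc, .inr (.inr ⟨j, hcoeffs⟩)⟩
  push Not at havoid
  obtain ⟨A, hA, hjA⟩ := havoid
  obtain ⟨⟨q, hqm⟩, hjq, hiso⟩ :=
    exists_layer_forall_tightSets_disjoint_erase hS.monotone hα hF.1 hA hjA hj
  cases q with
  | zero =>
    have hmin : IsMin (⟨0, hm⟩ : Fin m) := fun i _ ↦ Nat.zero_le i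
    obtain ⟨c, hc, hcoeffs⟩ := hF.exists_eq_bottom_of_isMin hS hcard hu hj hmin hjq hiso
    exact ⟨c, hc, .inr (.inl hcoeffs)⟩
  | succ p =>
    have hcov : (⟨p, by omega⟩ : Fin m) ⋖ ⟨p + 1, hqm⟩ := by
      simp [Fin.covBy_iff]
    obtain ⟨c, hc, hcoeffs⟩ := hF.exists_eq_step_of_covBy hS hcard hu hj hcov hjq hiso
    exact ⟨c, hc, .inl ⟨_, hqm, hcoeffs⟩⟩
end
end

section
/- For every p ∈ I and every S' ⊆ J with |S'∪S_p| ≥ n − l + 1, the mixing inequality Mix≥(S',p) holds for every (z,δ) ∈ X^{l,n}. -/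
open Finset

noncomputable section

/-!
Write `b = ∑ j ∈ S', z j` and `c i = #(S' ∪ S i) - n + l`. If `δ i ≠ 0`, then `z` vanishes on `S i`,
so at most `n - #(S' ∪ S i)` of the at least `l` ones of `z` lie outside `S'`, that is, `c i ≤ b`.
Summation by parts turns the `δ`-part of the mixing inequality into
`∑ i ∈ Ico p m, c i * (δ i - δ (i + 1)) + c m * δ m`. Since `δ` is antitone, the weights of the
`c i` are nonnegative, and they add up to `δ p ≤ 1`. Hence this sum is at most `b * δ p ≤ b`.
-/

section SummationByParts

variable {R : Type*} [CommRing R]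

theorem mul_add_sum_Icc_sub_mul_eq (c δ : ℕ → R) {p m : ℕ} (hpm : p ≤ m) :
    c p * δ p + ∑ i ∈ Icc (p + 1) m, (c i - c (i - 1)) * δ i =
      ∑ i ∈ Ico p m, c i * (δ i - δ (i + 1)) + c m * δ m := by
  induction m, hpm using Nat.le_induction with
  | base => simp
  | succ m hpm ih =>
    rw [sum_Icc_succ_top (by lia), sum_Ico_succ_top hpm, ← add_assoc, ih, Nat.add_sub_cancel]
    ring

theorem mul_add_sum_Icc_sub_mul_le [PartialOrder R] [IsOrderedRing R] {c δ : ℕ → R} {b : R}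
    {p m : ℕ} (hpm : p ≤ m) (hδ : AntitoneOn δ (Set.Icc p m)) (hδm : 0 ≤ δ m)
    (hc : ∀ i ∈ Set.Icc p m, δ i ≠ 0 → c i ≤ b) :
    c p * δ p + ∑ i ∈ Icc (p + 1) m, (c i - c (i - 1)) * δ i ≤ b * δ p := by
  have weighted_le : ∀ i ∈ Set.Icc p m, ∀ w, 0 ≤ w → w ≤ δ i → c i * w ≤ b * w := by
    intro i hi w hw hwi
    obtain h0 | h0 := eq_or_ne (δ i) 0
    · simp [(hwi.trans_eq h0).antisymm hw]
    · exact mul_le_mul_of_nonneg_right (hc i hi h0) hw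
  have step_le : ∀ i ∈ Ico p m, c i * (δ i - δ (i + 1)) ≤ b * (δ i - δ (i + 1)) := by
    intro i hi
    obtain ⟨hpi, him⟩ := mem_Ico.1 hi
    have hi : i ∈ Set.Icc p m := ⟨hpi, him.le⟩
    have hi' : i + 1 ∈ Set.Icc p m := ⟨by lia, him⟩
    exact weighted_le i hi _ (sub_nonneg.2 (hδ hi hi' i.le_succ))
      (sub_le_self _ (hδm.trans (hδ hi' ⟨hpm, le_rfl⟩ him)))
  calc c p * δ p + ∑ i ∈ Icc (p + 1) m, (c i - c (i - 1)) * δ i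
      = ∑ i ∈ Ico p m, c i * (δ i - δ (i + 1)) + c m * δ m :=
        mul_add_sum_Icc_sub_mul_eq c δ hpm
    _ ≤ ∑ i ∈ Ico p m, b * (δ i - δ (i + 1)) + b * δ m :=
        add_le_add (sum_le_sum step_le) (weighted_le m ⟨hpm, le_rfl⟩ _ hδm le_rfl)
    _ = b * δ p := by
        simpa using (mul_add_sum_Icc_sub_mul_eq (fun _ ↦ b) δ hpm).symm

end SummationByParts

section Chain

variable {α R : Type*} [Fintype α] [DecidableEq α] [CommRing R] [PartialOrder R] [IsOrderedRing R]
  {z : α → R}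

theorem card_union_sub_card_add_sum_le {s t : Finset α} (hz : ∀ j, z j ≤ 1)
    (ht : ∀ j ∈ t, z j = 0) :
    (#(s ∪ t) : R) - Fintype.card α + ∑ j, z j ≤ ∑ j ∈ s, z j := by
  have hunion : ∑ j ∈ s ∪ t, z j = ∑ j ∈ s, z j :=
    (sum_subset subset_union_left fun j hj hjs ↦
      ht j ((mem_union.1 hj).resolve_left hjs)).symm
  have hslack : ∑ j ∈ s ∪ t, (1 - z j) ≤ ∑ j, (1 - z j) :=
    sum_le_univ_sum_of_nonneg fun j ↦ sub_nonneg.2 (hz j)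
  simp only [sum_sub_distrib, sum_const, nsmul_eq_mul, mul_one, card_univ, hunion] at hslack
  linear_combination hslack

theorem card_union_mul_add_sum_le_sum_of_monotoneOn (hz : ∀ j, z j = 0 ∨ z j = 1) {l : R}
    (hl : l ≤ ∑ j, z j) {T : ℕ → Finset α} {p m : ℕ} (hpm : p ≤ m)
    (hT : MonotoneOn T (Set.Icc p m)) (s : Finset α) :
    ((#(s ∪ T p) : R) - Fintype.card α + l) * ∏ j ∈ T p, (1 - z j) +
        ∑ i ∈ Icc (p + 1) m,
          ((#(s ∪ T i) : R) - #(s ∪ T (i - 1))) * ∏ j ∈ T i, (1 - z j) ≤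
      ∑ j ∈ s, z j := by
  have hz0 (j : α) : 0 ≤ z j := by rcases hz j with h | h <;> simp [h]
  have hz1 (j : α) : z j ≤ 1 := by rcases hz j with h | h <;> simp [h]
  have hw0 (j : α) : 0 ≤ 1 - z j := sub_nonneg.2 (hz1 j)
  have hw1 (j : α) : 1 - z j ≤ 1 := sub_le_self 1 (hz0 j)
  let c : ℕ → R := fun i ↦ #(s ∪ T i) - Fintype.card α + l
  let δ : ℕ → R := fun i ↦ ∏ j ∈ T i, (1 - z j)
  have hδ : AntitoneOn δ (Set.Icc p m) := (prod_anti_set_of_le_one hw0 hw1).comp_monotoneOn hT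
  have hδm : 0 ≤ δ m := prod_nonneg fun j _ ↦ hw0 j
  have hc (i : ℕ) (hi : δ i ≠ 0) : c i ≤ ∑ j ∈ s, z j := by
    have hvanish : ∀ j ∈ T i, z j = 0 := fun j hj ↦
      (hz j).resolve_right fun h ↦ hi (prod_eq_zero hj (sub_eq_zero.2 h.symm))
    exact (add_le_add_right hl _).trans (card_union_sub_card_add_sum_le hz1 hvanish)
  calc _ = c p * δ p + ∑ i ∈ Icc (p + 1) m, (c i - c (i - 1)) * δ i := by
        simp only [c, δ, add_sub_add_right_eq_sub, sub_sub_sub_cancel_right]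
    _ ≤ (∑ j ∈ s, z j) * δ p :=
        mul_add_sum_Icc_sub_mul_le hpm hδ hδm fun i _ ↦ hc i
    _ ≤ ∑ j ∈ s, z j :=
        mul_le_of_le_one_right (sum_nonneg fun j _ ↦ hz0 j)
          (prod_le_one (fun j _ ↦ hw0 j) fun j _ ↦ hw1 j)

end Chain

section Nested

variable {n m l u : ℕ} {S : Fin m → Finset (Fin n)}

theorem monotone_SS (hS : Monotone S) : Monotone (SS n m S) := by
  intro a b hab
  obtain rfl | ha := a.eq_zero_or_pos
  · simp [SS]
  obtain hb | hb := le_or_gt b m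
  · have hSab : S ⟨a - 1, by lia⟩ ≤ S ⟨b - 1, by lia⟩ :=
      hS (Fin.mk_le_mk.2 (Nat.sub_le_sub_right hab 1))
    simpa only [SS, dif_pos (show 1 ≤ a ∧ a ≤ m from ⟨ha, hab.trans hb⟩),
      dif_pos (show 1 ≤ b ∧ b ≤ m from ⟨ha.trans_le hab, hb⟩)] using hSab
  · simp [SS, hb.not_ge, (ha.trans_le hab).ne']

theorem dd_eq_prod {zd : (Fin n → ℝ) × (Fin m → ℝ)} (hzd : zd ∈ Xset n m l u S) {k : ℕ}
    (hk : k ≤ m) : dd m zd.2 k = ∏ j ∈ SS n m S k, (1 - zd.1 j) := by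
  obtain ⟨-, -, hprod, -⟩ := hzd
  obtain rfl | hk0 := k.eq_zero_or_pos
  · simp [dd, SS]
  · simp [dd, SS, hk, Nat.one_le_iff_ne_zero.2 hk0.ne', hprod]

end Nested

theorem stmt12_general {n m l u : ℕ} {S : Fin m → Finset (Fin n)} (hS : Monotone S)
    {p : ℕ} (hpm : p ≤ m) (S' : Finset (Fin n)) {zd : (Fin n → ℝ) × (Fin m → ℝ)}
    (hzd : zd ∈ Xset n m l u S) : MixGe n m l S p S' zd := by
  have hmix := card_union_mul_add_sum_le_sum_of_monotoneOn hzd.1 hzd.2.2.2.1 hpm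
    ((monotone_SS hS).monotoneOn _) S'
  rw [MixGe, mixGeLHS, sub_nonpos, dd_eq_prod hzd hpm,
    sum_congr rfl fun i hi ↦ by rw [dd_eq_prod hzd (mem_Icc.1 hi).2]]
  simpa only [Fintype.card_fin] using hmix

theorem stmt12 (n m l u : ℕ) (S : Fin m → Finset (Fin n))
    (hn : 0 < n) (hm : 0 < m) (hu : 2 ≤ u) (hlu : l < u)
    (hnested : ∀ i j : Fin m, i < j → S i ⊂ S j)
    (hS1 : 2 ≤ (SS n m S 1).card)
    (hSm : l ≤ n - (SS n m S m).card)
    (p : ℕ) (hp1 : 1 ≤ p) (hpm : p ≤ m)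
    (S' : Finset (Fin n)) (hS' : n - l + 1 ≤ (S' ∪ SS n m S p).card) :
    ∀ zd ∈ Xset n m l n S, MixGe n m l S p S' zd := by
  have hS : StrictMono S := fun i j ↦ hnested i j
  exact fun _ hzd ↦ stmt12_general hS.monotone hpm S' hzd
end
end
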